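/- Let K be a finite set, let Σ be a positive definite covariance matrix indexed by K, and let G be an undirected graph over K such that the Gaussian distribution N(0, Σ) satisfies the global Markov property with respect to G (equivalently, (Σ⁻¹)_{i,j} = 0 whenever i ≠ j and i − j is not an edge of G). Then for all distinct i, l ∈ K: Σ_{i,l} = Σ_{ρ ∈ π_{i,l}} Σ_{ρ_1,ρ_1} ∏_{n=2}^{|ρ|} β_{ρ_n,ρ_{n−1} | K∖{ρ_n,ρ_{n−1}}} · (Σ_{ρ_n,ρ_n | {ρ_1,…,ρ_{n−1}}} / Σ_{ρ_n,ρ_n | K∖{ρ_n}}), where π_{i,l} is the set of paths in G between i and l, each path ρ being written as a sequence of distinct nodes ρ_1 = l, …, ρ_{|ρ|} = i with consecutive nodes adjacent in G. -/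

import Mathlib

open Matrix MeasureTheory ProbabilityTheory

attribute [local instance] Classical.propDecidable

noncomputable section

variable {V : Type*}

/-- The submatrix of `S` with rows indexed by `X` and columns indexed by `Y`. -/
def msub (S : Matrix V V ℝ) (X Y : Finset V) : Matrix X Y ℝ :=
  Matrix.of fun i j => S i.1 j.1

/-- Conditional independence `X ⊥ Y | Z` for a centered Gaussian distribution with
positive definite covariance matrix `S`:  `Σ_{X,Y} − Σ_{X,Z} (Σ_{Z,Z})⁻¹ Σ_{Z,Y} = 0`. -/
def gaussCI [Fintype V] [DecidableEq V] (S : Matrix V V ℝ) (X Y Z : Finset V) : Prop :=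
  msub S X Y - msub S X Z * (msub S Z Z)⁻¹ * msub S Z Y = 0

/-- Pairwise disjointness of three sets. -/
def PDisj (X Y Z : Finset V) : Prop :=
  Disjoint X Y ∧ Disjoint X Z ∧ Disjoint Y Z

/-- Pairwise disjointness of four sets. -/
def PDisj4 (X Y W Z : Finset V) : Prop :=
  Disjoint X Y ∧ Disjoint X W ∧ Disjoint X Z ∧ Disjoint Y W ∧ Disjoint Y Z ∧ Disjoint W Z

/-- A graph with three kinds of edges: undirected (`undir`), solid directed (`solid`,
written `A → B`) and dashed directed (`dashed`, written `A ⇢ B`).  No axioms are imposed. -/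
structure PreGraph (V : Type*) where
  undir : V → V → Prop
  solid : V → V → Prop
  dashed : V → V → Prop

namespace PreGraph

variable (G : PreGraph V)

/-- There is an undirected edge between `a` and `b`. -/
def und (a b : V) : Prop := G.undir a b ∨ G.undir b a

/-- `a` and `b` are adjacent. -/
def adj (a b : V) : Prop :=
  G.und a b ∨ G.solid a b ∨ G.solid b a ∨ G.dashed a b ∨ G.dashed b a

/-- The edge between `a` and `b` is undirected or directed (solid or dashed) from `a` to `b`. -/
def fwd (a b : V) : Prop := G.und a b ∨ G.solid a b ∨ G.dashed a b

/-- A route in `G`: a sequence of nodes `nodes 0, nodes 1, …, nodes len` such that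
consecutive nodes are adjacent. -/
structure Route (G : PreGraph V) where
  len : ℕ
  nodes : ℕ → V
  adj_step : ∀ i < len, G.adj (nodes i) (nodes (i + 1))

/-- `c` is a collider node between `a` and `b`:  `a ⇢ c ⇠ b`, `a ⇢ c − b` (in either of the
two traversal directions) or `a ⇢ c ← b` (in either of the two traversal directions). -/
def colliderTriple (a c b : V) : Prop :=
  (G.dashed a c ∧ G.dashed b c) ∨
  (G.dashed a c ∧ G.und c b) ∨ (G.und a c ∧ G.dashed b c) ∨
  (G.dashed a c ∧ G.solid b c) ∨ (G.solid a c ∧ G.dashed b c)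

variable {G} in
/-- The node at position `k` of the route `ρ` is a collider node of `ρ`. -/
def Route.colliderNodeAt (ρ : G.Route) (k : ℕ) : Prop :=
  1 ≤ k ∧ k < ρ.len ∧ G.colliderTriple (ρ.nodes (k - 1)) (ρ.nodes k) (ρ.nodes (k + 1))

variable {G} in
/-- The positions `p, …, q` of `ρ` form a collider section of `ρ`, i.e. a maximal undirected
subroute `C1 − ⋯ − Cn` of `ρ` such that `A → C1 − ⋯ − Cn ← B` is a subroute of `ρ`. -/
def Route.colliderSectionOcc (ρ : G.Route) (p q : ℕ) : Prop :=
  1 ≤ p ∧ p ≤ q ∧ q + 1 ≤ ρ.len ∧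
  (∀ m, p ≤ m → m < q → G.und (ρ.nodes m) (ρ.nodes (m + 1))) ∧
  G.solid (ρ.nodes (p - 1)) (ρ.nodes p) ∧ G.solid (ρ.nodes (q + 1)) (ρ.nodes q)

variable {G} in
/-- The node at position `k` of `ρ` lies in a collider section of `ρ`. -/
def Route.inColliderSectionAt (ρ : G.Route) (k : ℕ) : Prop :=
  ∃ p q, ρ.colliderSectionOcc p q ∧ p ≤ k ∧ k ≤ q

variable {G} in
/-- The route `ρ` is `Z`-open: (i) all collider nodes are in `Z`, (ii) every collider
section contains some node of `Z`, and (iii) every node which is neither a collider node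
nor inside a collider section is outside `Z`. -/
def Route.IsZOpen (ρ : G.Route) (Z : Finset V) : Prop :=
  (∀ k, ρ.colliderNodeAt k → ρ.nodes k ∈ Z) ∧
  (∀ p q, ρ.colliderSectionOcc p q → ∃ m, p ≤ m ∧ m ≤ q ∧ ρ.nodes m ∈ Z) ∧
  (∀ k ≤ ρ.len, ¬ ρ.colliderNodeAt k → ¬ ρ.inColliderSectionAt k → ρ.nodes k ∉ Z)

variable {G} in
/-- A pure collider route (with at least one edge): every intermediate node is a collider
node or lies in a collider section of the route. -/
def Route.IsPureCollider (ρ : G.Route) : Prop :=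
  1 ≤ ρ.len ∧ ∀ k, 0 < k → k < ρ.len → ρ.colliderNodeAt k ∨ ρ.inColliderSectionAt k

/-- Separation `X ⊥_G Y | Z`: there is no `Z`-open route in `G` between a node of `X` and a
node of `Y`. -/
def Sep (X Y Z : Finset V) : Prop :=
  ¬ ∃ ρ : G.Route,
      ((ρ.nodes 0 ∈ X ∧ ρ.nodes ρ.len ∈ Y) ∨ (ρ.nodes 0 ∈ Y ∧ ρ.nodes ρ.len ∈ X)) ∧
      ρ.IsZOpen Z

section Finite

variable [Fintype V] [DecidableEq V]

/-- The fathers of `X`: nodes `b` with `b → a` in `G` for some `a ∈ X`. -/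
def fa (X : Finset V) : Finset V := Finset.univ.filter fun b => ∃ a ∈ X, G.solid b a

/-- The mothers of `X`: nodes `b` with `b ⇢ a` in `G` for some `a ∈ X`. -/
def mo (X : Finset V) : Finset V := Finset.univ.filter fun b => ∃ a ∈ X, G.dashed b a

/-- The parents of `X`. -/
def pa (X : Finset V) : Finset V := G.fa X ∪ G.mo X

/-- The neighbors of `X`: nodes `b` with `b − a` in `G` for some `a ∈ X`. -/
def nb (X : Finset V) : Finset V := Finset.univ.filter fun b => ∃ a ∈ X, G.und b a

/-- There is a descending route from `a` to `b`: all edges undirected or directed in the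
direction of travel, containing at least one directed edge. -/
def descends (a b : V) : Prop :=
  ∃ (n : ℕ) (f : ℕ → V), f 0 = a ∧ f n = b ∧ (∀ i < n, G.fwd (f i) (f (i + 1))) ∧
    ∃ i < n, G.solid (f i) (f (i + 1)) ∨ G.dashed (f i) (f (i + 1))

/-- The non-descendants of `X`. -/
def nd (X : Finset V) : Finset V := Finset.univ.filter fun b => ¬ ∃ a ∈ X, G.descends a b

/-- Connectivity by undirected routes. -/
def uconn : V → V → Prop := Relation.ReflTransGen G.und

/-- The chain component containing `i`. -/
def cc (i : V) : Finset V := Finset.univ.filter fun j => G.uconn i j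

/-- The set of chain components of `G`. -/
def ccs : Finset (Finset V) := Finset.univ.image G.cc

/-- The nodes incident to some edge of `G`. -/
def verts : Finset V := Finset.univ.filter fun a => ∃ b, G.adj a b

/-- `π` is a topological ordering of the chain components: it is constant on components and
increases along directed edges. -/
def IsTopoOrder (π : V → ℕ) : Prop :=
  (∀ a b, G.uconn a b → π a = π b) ∧ ∀ a b, G.solid a b ∨ G.dashed a b → π a < π b

/-- Equation 1: for every topological ordering of the chain components, each component `K`
is independent of the preceding components minus `Pa(K)` given `Pa(K)`. -/
def eq1 (S : Matrix V V ℝ) : Prop :=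
  ∀ π : V → ℕ, G.IsTopoOrder π → ∀ i : V,
    gaussCI S (G.cc i) ((Finset.univ.filter fun b => π b < π i) \ G.pa (G.cc i))
      (G.pa (G.cc i))

/-- The regression coefficients `β_K = Σ_{K,Pa(K)} (Σ_{Pa(K),Pa(K)})⁻¹`. -/
def beta (S : Matrix V V ℝ) (K : Finset V) : Matrix K (G.pa K) ℝ :=
  msub S K (G.pa K) * (msub S (G.pa K) (G.pa K))⁻¹

/-- The conditional covariance matrix `Λ_K`. -/
def lam (S : Matrix V V ℝ) (K : Finset V) : Matrix K K ℝ :=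
  msub S K K - msub S K (G.pa K) * (msub S (G.pa K) (G.pa K))⁻¹ * msub S (G.pa K) K

/-- The precision matrix `Ω = (Σ_{K ∪ Pa(K), K ∪ Pa(K)})⁻¹`. -/
def om (S : Matrix V V ℝ) (K : Finset V) : Matrix ↥(K ∪ G.pa K) ↥(K ∪ G.pa K) ℝ :=
  (msub S (K ∪ G.pa K) (K ∪ G.pa K))⁻¹

/-- Equation 6: `(β_K)_{i,j} = 0` for all `i ∈ K` and `j ∈ Mo(K) ∖ Mo(i)`. -/
def eq6 (S : Matrix V V ℝ) : Prop :=
  ∀ K ∈ G.ccs, ∀ i (hi : i ∈ K), ∀ j (hj : j ∈ G.pa K),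
    j ∈ G.mo K → j ∉ G.mo {i} → G.beta S K ⟨i, hi⟩ ⟨j, hj⟩ = 0

/-- Equation 7: `Ω_{i,j} = 0` for all `i ∈ K` and `j ∈ Fa(K) ∖ Fa(i)`. -/
def eq7 (S : Matrix V V ℝ) : Prop :=
  ∀ K ∈ G.ccs, ∀ i (hi : i ∈ K), ∀ j (hj : j ∈ G.pa K),
    j ∈ G.fa K → j ∉ G.fa {i} →
    G.om S K ⟨i, Finset.mem_union_left _ hi⟩ ⟨j, Finset.mem_union_right _ hj⟩ = 0

/-- Equation 8: `(Λ_K⁻¹)_{i,j} = 0` for all `i ∈ K` and `j ∈ K ∖ ({i} ∪ Ne(i))`. -/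
def eq8 (S : Matrix V V ℝ) : Prop :=
  ∀ K ∈ G.ccs, ∀ i (hi : i ∈ K), ∀ j (hj : j ∈ K),
    j ≠ i → j ∉ G.nb {i} → (G.lam S K)⁻¹ ⟨i, hi⟩ ⟨j, hj⟩ = 0

/-- `p` satisfies Equation 1 and the zero restrictions of Equations 6–8 w.r.t. `G`. -/
def eqs (S : Matrix V V ℝ) : Prop := G.eq1 S ∧ G.eq6 S ∧ G.eq7 S ∧ G.eq8 S

/-- The global Markov property with respect to `G`, for an abstract ternary
(conditional-independence) relation `I`. -/
def globalMP (I : Finset V → Finset V → Finset V → Prop) : Prop :=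
  ∀ X Y Z : Finset V, PDisj X Y Z → G.Sep X Y Z → I X Y Z

/-- The block-recursive Markov property (B1)–(B3) with respect to `G`. -/
def blockRecMP (I : Finset V → Finset V → Finset V → Prop) : Prop :=
  ∀ K ∈ G.ccs, ∀ i ∈ K,
    I {i} (((G.nd K \ K) \ G.fa K) \ G.mo {i}) (G.fa K ∪ G.mo {i}) ∧
    I {i} (((G.nd K \ K) \ G.fa {i}) \ G.mo K) ((K \ {i}) ∪ G.fa {i} ∪ G.mo K) ∧
    ∀ j ∈ K, j ≠ i → j ∉ G.nb {i} → I {i} {j} ((K \ {i, j}) ∪ G.pa K)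

/-- The pairwise Markov property (P1)–(P2) with respect to `G`. -/
def pairwiseMP (I : Finset V → Finset V → Finset V → Prop) : Prop :=
  ∀ i j : V, i ≠ j → ¬ G.adj i j → ∀ K ∈ G.ccs, i ∈ K →
    (j ∈ ((G.nd {i} \ K) \ G.fa K) \ G.mo {i} → I {i} {j} ((G.nd {i} \ K) \ {j})) ∧
    (j ∈ ((G.nd {i} \ {i}) \ G.fa {i}) \ G.mo K → I {i} {j} (G.nd {i} \ {i, j}))

/-- The local Markov property (L1)–(L2) with respect to `G`. -/
def localMP (I : Finset V → Finset V → Finset V → Prop) : Prop :=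
  ∀ K ∈ G.ccs, ∀ i ∈ K,
    I {i} (((G.nd {i} \ K) \ G.fa K) \ G.mo {i}) (G.fa K ∪ G.mo {i}) ∧
    I {i} ((((G.nd {i} \ {i}) \ G.pa {i}) \ G.nb {i}) \ G.mo (G.nb {i}))
      (G.pa {i} ∪ G.nb {i} ∪ G.mo (G.nb {i}))

/-- The subgraph `G^U`: it keeps the edge `A ⊸ B` (with its type and orientation) iff `G`
has a route `A ⊸ B ⊸ ⋯ ⊸ C` with `C ∈ U`, all edges undirected or directed in the
direction of travel, and no subroute `R ⇢ S − T`. -/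
def goodFrom (U : Finset V) (a b : V) : Prop :=
  ∃ (f : ℕ → V) (n : ℕ), 1 ≤ n ∧ f 0 = a ∧ f 1 = b ∧ f n ∈ U ∧
    (∀ i < n, G.fwd (f i) (f (i + 1))) ∧
    ∀ i, i + 2 ≤ n → ¬ (G.dashed (f i) (f (i + 1)) ∧ G.und (f (i + 1)) (f (i + 2)))

/-- The graph `G^U`. -/
def derived (U : Finset V) : PreGraph V where
  undir a b := G.undir a b ∧ G.goodFrom U a b
  solid a b := G.solid a b ∧ G.goodFrom U a b
  dashed a b := G.dashed a b ∧ G.goodFrom U a b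

/-- The set `Y'` used in Lemmas 2 and 3:
`Y' = {B' ∈ V(G^{X∪Y∪Z}) ∖ (X ∪ Z) : X ⊥_{G^{X∪Y∪Z}} B' | Z}`. -/
def derivedYp (X Y Z : Finset V) : Finset V :=
  ((G.derived (X ∪ Y ∪ Z)).verts \ (X ∪ Z)).filter fun b =>
    (G.derived (X ∪ Y ∪ Z)).Sep X {b} Z

/-- The set `X' = V(G^{X∪Y∪Z}) ∖ (Y' ∪ Z)` used in Lemmas 2 and 3. -/
def derivedXp (X Y Z : Finset V) : Finset V :=
  (G.derived (X ∪ Y ∪ Z)).verts \ (G.derivedYp X Y Z ∪ Z)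

end Finite

end PreGraph

/-- A chain graph: at most one edge between any pair of distinct nodes (undirected, solid
directed, or dashed directed) and no semidirected cycles. -/
structure ChainGraph (V : Type*) extends PreGraph V where
  undir_symm : ∀ a b, toPreGraph.undir a b → toPreGraph.undir b a
  undir_irrefl : ∀ a, ¬ toPreGraph.undir a a
  solid_irrefl : ∀ a, ¬ toPreGraph.solid a a
  dashed_irrefl : ∀ a, ¬ toPreGraph.dashed a a
  undir_not_solid : ∀ a b, toPreGraph.undir a b → ¬ toPreGraph.solid a b
  undir_not_dashed : ∀ a b, toPreGraph.undir a b → ¬ toPreGraph.dashed a b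
  solid_not_solid : ∀ a b, toPreGraph.solid a b → ¬ toPreGraph.solid b a
  solid_not_dashed : ∀ a b, toPreGraph.solid a b → ¬ toPreGraph.dashed a b
  solid_not_dashed_rev : ∀ a b, toPreGraph.solid a b → ¬ toPreGraph.dashed b a
  dashed_not_dashed : ∀ a b, toPreGraph.dashed a b → ¬ toPreGraph.dashed b a
  no_semidirected_cycle : ¬ ∃ (f : ℕ → V) (n : ℕ), 1 ≤ n ∧ f n = f 0 ∧
    (toPreGraph.solid (f 0) (f 1) ∨ toPreGraph.dashed (f 0) (f 1)) ∧
    ∀ i < n, toPreGraph.fwd (f i) (f (i + 1))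

namespace ChainGraph

variable (G : ChainGraph V)

/-- An LWF chain graph: no dashed directed edges. -/
def IsLWF : Prop := ∀ a b, ¬ G.toPreGraph.dashed a b

/-- An AMP chain graph: no solid directed edges. -/
def IsAMP : Prop := ∀ a b, ¬ G.toPreGraph.solid a b

/-- A unified chain graph: `Fa(K) ∩ Mo(K) = ∅` for every chain component `K`. -/
def IsUCG [Fintype V] [DecidableEq V] : Prop :=
  ∀ K ∈ G.toPreGraph.ccs, Disjoint (G.toPreGraph.fa K) (G.toPreGraph.mo K)

end ChainGraph


/-- The AMP chain graph obtained from `G` by deleting every solid directed edge. -/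
def ChainGraph.dropSolid (G : ChainGraph V) : ChainGraph V where
  undir := G.toPreGraph.undir
  solid _ _ := False
  dashed := G.toPreGraph.dashed
  undir_symm := G.undir_symm
  undir_irrefl := G.undir_irrefl
  solid_irrefl _ h := h
  dashed_irrefl := G.dashed_irrefl
  undir_not_solid _ _ _ h := h
  undir_not_dashed := G.undir_not_dashed
  solid_not_solid _ _ h := h.elim
  solid_not_dashed _ _ h := h.elim
  solid_not_dashed_rev _ _ h := h.elim
  dashed_not_dashed := G.dashed_not_dashed
  no_semidirected_cycle := fun ⟨f, n, hn, hcyc, hstart, hsteps⟩ =>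
    G.no_semidirected_cycle ⟨f, n, hn, hcyc, Or.inr (hstart.resolve_left id),
      fun i hi => (hsteps i hi).imp id (Or.imp False.elim id)⟩

/-- The restriction of `ω : V → ℝ` to the coordinates in `S`. -/
def marg (S : Finset V) : (V → ℝ) → (S → ℝ) := fun ω s => ω s.1

lemma marg_measurable (S : Finset V) : Measurable (marg (V := V) S) :=
  measurable_pi_lambda _ fun s => measurable_pi_apply s.1

/-- Conditional independence of the coordinate tuples indexed by `X` and `Y` given the
coordinate tuple indexed by `Z`, for a distribution `μ` on `ℝ^V`. -/
def mCI [Fintype V] (μ : Measure (V → ℝ)) [IsFiniteMeasure μ] (X Y Z : Finset V) : Prop :=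
  CondIndepFun (MeasurableSpace.comap (marg Z) inferInstance) ((marg_measurable Z).comap_le)
    (marg X) (marg Y) μ

/-- A probability distribution `μ` on `ℝ^V` satisfies the global Markov property with
respect to `G`. -/
def measGlobalMarkov [Fintype V] [DecidableEq V] (G : PreGraph V) (μ : Measure (V → ℝ))
    [IsFiniteMeasure μ] : Prop :=
  ∀ X Y Z : Finset V, PDisj X Y Z → G.Sep X Y Z → mCI μ X Y Z

/-- A graphoid over `V`: a ternary relation on pairwise disjoint subsets of `V` satisfying
symmetry, decomposition, weak union, contraction and intersection. -/
structure Graphoid (V : Type*) [DecidableEq V] where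
  rel : Finset V → Finset V → Finset V → Prop
  symmetry : ∀ X Y Z : Finset V, PDisj X Y Z → rel X Y Z → rel Y X Z
  decomposition : ∀ X Y W Z : Finset V, PDisj4 X Y W Z → rel X (Y ∪ W) Z → rel X Y Z
  weakUnion : ∀ X Y W Z : Finset V, PDisj4 X Y W Z → rel X (Y ∪ W) Z → rel X Y (Z ∪ W)
  contraction : ∀ X Y W Z : Finset V, PDisj4 X Y W Z →
    rel X Y (Z ∪ W) → rel X W Z → rel X (Y ∪ W) Z
  intersection : ∀ X Y W Z : Finset V, PDisj4 X Y W Z →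
    rel X Y (Z ∪ W) → rel X W (Z ∪ Y) → rel X (Y ∪ W) Z

/-- The conditional variance `Σ_{a,a|B} = Σ_{a,a} − Σ_{a,B} (Σ_{B,B})⁻¹ Σ_{B,a}`. -/
def condVar [Fintype V] [DecidableEq V] (S : Matrix V V ℝ) (a : V) (B : Finset V) : ℝ :=
  S a a - ∑ b₁ : B, ∑ b₂ : B, S a b₁.1 * (msub S B B)⁻¹ b₁ b₂ * S b₂.1 a

/-- The conditional covariance `Σ_{i,l|B} = Σ_{i,l} − Σ_{i,B} (Σ_{B,B})⁻¹ Σ_{B,l}`. -/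
def condCov [Fintype V] [DecidableEq V] (S : Matrix V V ℝ) (B : Finset V) (i l : V) : ℝ :=
  S i l - ∑ b₁ : B, ∑ b₂ : B, S i b₁.1 * (msub S B B)⁻¹ b₁ b₂ * S b₂.1 l

lemma condCov_empty [Fintype V] [DecidableEq V] (S : Matrix V V ℝ) (i l : V) :
    condCov S ∅ i l = S i l := by
  simp only [condCov, Finset.univ_eq_empty, Finset.sum_empty, sub_zero]

lemma isUnit_det_msub_of_posDef [Fintype V] [DecidableEq V] {S : Matrix V V ℝ}
    (hS : S.PosDef) (B : Finset V) : IsUnit (msub S B B).det :=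
  (Matrix.isUnit_iff_isUnit_det _).mp
    (hS.submatrix (e := fun b : B => b.1) Subtype.val_injective).isUnit

lemma condCov_eq_zero_of_mem [Fintype V] [DecidableEq V] {S : Matrix V V ℝ}
    (hS : S.PosDef) {B : Finset V} {j : V} (hj : j ∈ B) (l : V) : condCov S B j l = 0 := by
  have h := Matrix.mul_nonsing_inv _ (isUnit_det_msub_of_posDef hS B)
  have key : ∀ b₂ : B, ∑ b₁ : B, S j b₁.1 * (msub S B B)⁻¹ b₁ b₂ =
      if (⟨j, hj⟩ : B) = b₂ then 1 else 0 := by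
    intro b₂
    have h' := congrFun (congrFun h ⟨j, hj⟩) b₂
    rw [Matrix.mul_apply, Matrix.one_apply] at h'
    exact h'
  unfold condCov
  rw [Finset.sum_comm]
  simp_rw [← Finset.sum_mul, key]
  simp

lemma condCov_comm [Fintype V] [DecidableEq V] {S : Matrix V V ℝ}
    (hS : S.PosDef) (B : Finset V) (i l : V) : condCov S B i l = condCov S B l i := by
  have hsymm : ∀ a b, S a b = S b a := fun a b => by simpa using hS.isHermitian.apply b a
  have hinv : ∀ a b, (msub S B B)⁻¹ a b = (msub S B B)⁻¹ b a := by
    have h : (msub S B B)ᵀ = msub S B B := by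
      ext a b
      exact hsymm _ _
    intro a b
    conv_lhs => rw [← h, ← Matrix.transpose_nonsing_inv]
    rfl
  unfold condCov
  rw [Finset.sum_comm, hsymm i l]
  congr 1
  refine Finset.sum_congr rfl fun a _ => Finset.sum_congr rfl fun b _ => ?_
  rw [hsymm i, hsymm l, hinv b a]
  ring

/-- The conditional covariance given `Aᶜ` is a right inverse of the precision matrix restricted
to `A`. -/
lemma sum_inv_mul_condCov [Fintype V] [DecidableEq V] {S : Matrix V V ℝ}
    (hS : S.PosDef) {A : Finset V} {k : V} (hk : k ∈ A) (l : V) :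
    ∑ j ∈ A, S⁻¹ k j * condCov S Aᶜ j l = if k = l then 1 else 0 := by
  have h : ∀ c, ∑ j, S⁻¹ k j * S j c = if k = c then 1 else 0 := by
    intro c
    have h' := congrFun (congrFun (Matrix.nonsing_inv_mul S
      ((Matrix.isUnit_iff_isUnit_det _).mp hS.isUnit)) k) c
    rwa [Matrix.mul_apply, Matrix.one_apply] at h'
  have hext : ∑ j ∈ A, S⁻¹ k j * condCov S Aᶜ j l = ∑ j, S⁻¹ k j * condCov S Aᶜ j l := by
    refine Finset.sum_subset (Finset.subset_univ _) fun j _ hj => ?_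
    rw [condCov_eq_zero_of_mem hS (Finset.mem_compl.mpr hj), mul_zero]
  rw [hext]
  unfold condCov
  simp_rw [mul_sub, Finset.sum_sub_distrib, h, Finset.mul_sum]
  rw [sub_eq_self, Finset.sum_comm]
  refine Finset.sum_eq_zero fun b₁ _ => ?_
  rw [Finset.sum_comm]
  refine Finset.sum_eq_zero fun b₂ _ => ?_
  have hb : k ≠ b₁.1 := fun hb => Finset.mem_compl.mp b₁.2 (hb ▸ hk)
  simp_rw [← mul_assoc, ← Finset.sum_mul, h, if_neg hb, zero_mul]

lemma condVar_erase_self [Fintype V] [DecidableEq V] {S : Matrix V V ℝ}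
    (hS : S.PosDef) (a : V) : condVar S a (Finset.univ.erase a) = (S⁻¹ a a)⁻¹ := by
  have h := sum_inv_mul_condCov hS (Finset.mem_singleton_self a) a
  rw [Finset.sum_singleton, if_pos rfl] at h
  have hc : Finset.univ.erase a = ({a} : Finset V)ᶜ := by
    ext x
    simp
  rw [hc]
  exact eq_inv_of_mul_eq_one_right h

/-- Conditioning on one more variable `l`: the block inversion formula. -/
lemma condCov_eq_mul_sum_erase [Fintype V] [DecidableEq V] {S : Matrix V V ℝ}
    (hS : S.PosDef) {A : Finset V} {i l : V} (hi : i ∈ A) (hl : l ∈ A) (hil : i ≠ l) :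
    condCov S Aᶜ i l =
      condCov S Aᶜ l l * ∑ j ∈ A.erase l, -S⁻¹ j l * condCov S (A.erase l)ᶜ i j := by
  have hsymm : ∀ a b, S⁻¹ a b = S⁻¹ b a := fun a b => by
    simpa using hS.inv.isHermitian.apply b a
  have hcol : ∀ k ∈ A.erase l,
      ∑ j ∈ A.erase l, S⁻¹ k j * condCov S Aᶜ j l = -S⁻¹ k l * condCov S Aᶜ l l := by
    intro k hk
    have h := sum_inv_mul_condCov hS (Finset.mem_of_mem_erase hk) l
    rw [if_neg (Finset.ne_of_mem_erase hk), ← Finset.add_sum_erase _ _ hl] at h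
    linarith
  have hrow : ∀ j ∈ A.erase l,
      ∑ k ∈ A.erase l, condCov S (A.erase l)ᶜ i k * S⁻¹ k j = if j = i then 1 else 0 := by
    intro j hj
    rw [← sum_inv_mul_condCov hS hj i]
    refine Finset.sum_congr rfl fun k _ => ?_
    rw [condCov_comm hS _ i k, hsymm k j, mul_comm]
  calc condCov S Aᶜ i l
      = ∑ j ∈ A.erase l, (if j = i then 1 else 0) * condCov S Aᶜ j l := by
        simp [hi, hil]
    _ = ∑ j ∈ A.erase l, (∑ k ∈ A.erase l, condCov S (A.erase l)ᶜ i k * S⁻¹ k j) *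
          condCov S Aᶜ j l := Finset.sum_congr rfl fun j hj => by rw [hrow j hj]
    _ = ∑ k ∈ A.erase l, condCov S (A.erase l)ᶜ i k *
          ∑ j ∈ A.erase l, S⁻¹ k j * condCov S Aᶜ j l := by
        simp_rw [Finset.sum_mul, Finset.mul_sum]
        rw [Finset.sum_comm]
        simp_rw [mul_assoc]
    _ = _ := by
        rw [Finset.mul_sum]
        refine Finset.sum_congr rfl fun k hk => ?_
        rw [hcol k hk]
        ring

/-- The weight of the node sequence `f` inside `A`: diagonal entries of `m` on the successively
shrinking sets, times the edge weights `w`. -/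
def pathWeight [DecidableEq V] (m : Finset V → V → V → ℝ) (w : V → V → ℝ) (A : Finset V)
    {n : ℕ} (f : Fin (n + 1) → V) : ℝ :=
  m A (f 0) (f 0) * ∏ k : Fin n, w (f k.succ) (f k.castSucc) *
    m (A \ (Finset.univ.filter fun q : Fin (n + 1) => q ≤ k.castSucc).image f)
      (f k.succ) (f k.succ)

/-- The node sequences with `n` steps and distinct nodes in `A` leading from `l` to `i`. -/
def pathsIn [Fintype V] [DecidableEq V] (A : Finset V) (n : ℕ) (l i : V) :
    Finset (Fin (n + 1) → V) :=
  Finset.univ.filter fun f =>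
    Function.Injective f ∧ f 0 = l ∧ f (Fin.last n) = i ∧ ∀ k, f k ∈ A

lemma pathWeight_cons [DecidableEq V] (m : Finset V → V → V → ℝ) (w : V → V → ℝ)
    (A : Finset V) {n : ℕ} (l : V) (g : Fin (n + 1) → V) :
    pathWeight m w A (Fin.cons l g : Fin (n + 2) → V) =
      m A l l * (w (g 0) l * pathWeight m w (A.erase l) g) := by
  have h0 : (Finset.univ.filter fun q : Fin (n + 2) => q ≤ (0 : Fin (n + 1)).castSucc).image
      (Fin.cons l g : Fin (n + 2) → V) = {l} := by
    ext x
    simp [eq_comm]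
  have hs : ∀ k : Fin n, (Finset.univ.filter fun q : Fin (n + 2) => q ≤ k.succ.castSucc).image
      (Fin.cons l g : Fin (n + 2) → V) =
        insert l ((Finset.univ.filter fun q : Fin (n + 1) => q ≤ k.castSucc).image g) := by
    intro k
    ext x
    simp [Fin.exists_fin_succ, eq_comm]
  unfold pathWeight
  rw [Fin.prod_univ_succ, h0]
  simp_rw [hs, Finset.sdiff_insert, ← Finset.erase_sdiff_comm, Finset.sdiff_singleton_eq_erase,
    ← Fin.succ_castSucc, Fin.castSucc_zero, Fin.cons_succ, Fin.cons_zero]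
  ring

lemma cons_mem_pathsIn [Fintype V] [DecidableEq V] {A : Finset V} {n : ℕ} {l i : V}
    (hl : l ∈ A) (g : Fin (n + 1) → V) :
    (Fin.cons l g : Fin (n + 2) → V) ∈ pathsIn A (n + 1) l i ↔
      g ∈ pathsIn (A.erase l) n (g 0) i := by
  have hA : (∀ k, (Fin.cons l g : Fin (n + 2) → V) k ∈ A) ↔ ∀ k, g k ∈ A := by
    rw [Fin.forall_fin_succ]
    simp [hl]
  simp only [pathsIn, Finset.mem_filter, Finset.mem_univ, true_and, Fin.cons_zero,
    Fin.cons_injective_iff, hA, Fin.cons_succ, ← Fin.succ_last, Finset.mem_erase, Set.mem_range,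
    not_exists, forall_and, ne_eq]
  tauto

lemma sum_pathsIn_succ [Fintype V] [DecidableEq V] (m : Finset V → V → V → ℝ)
    (w : V → V → ℝ) {A : Finset V} (n : ℕ) {l : V} (i : V) (hl : l ∈ A) :
    ∑ f ∈ pathsIn A (n + 1) l i, pathWeight m w A f =
      m A l l * ∑ j ∈ A.erase l, w j l *
        ∑ g ∈ pathsIn (A.erase l) n j i, pathWeight m w (A.erase l) g := by
  simp_rw [Finset.mul_sum]
  rw [Finset.sum_sigma']
  symm
  refine Finset.sum_bij (fun p _ => (Fin.cons l p.2 : Fin (n + 2) → V)) ?_ ?_ ?_ ?_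
  · rintro ⟨j, g⟩ h
    obtain ⟨-, hg⟩ := Finset.mem_sigma.mp h
    have hj : g 0 = j := (Finset.mem_filter.mp hg).2.2.1
    subst hj
    exact (cons_mem_pathsIn hl g).mpr hg
  · rintro ⟨j, g⟩ h ⟨j', g'⟩ h' heq
    obtain ⟨-, hg⟩ := Finset.mem_sigma.mp h
    obtain ⟨-, hg'⟩ := Finset.mem_sigma.mp h'
    have hj : g 0 = j := (Finset.mem_filter.mp hg).2.2.1
    have hj' : g' 0 = j' := (Finset.mem_filter.mp hg').2.2.1
    obtain rfl : g = g' := (Fin.cons_injective2 heq).2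
    subst hj hj'
    rfl
  · intro f hf
    have hf0 : f 0 = l := (Finset.mem_filter.mp hf).2.2.1
    have hcons : (Fin.cons l (Fin.tail f) : Fin (n + 2) → V) = f := by
      rw [← hf0]
      exact Fin.cons_self_tail f
    have hg := (cons_mem_pathsIn hl (Fin.tail f)).mp (hcons.symm ▸ hf)
    exact ⟨⟨Fin.tail f 0, Fin.tail f⟩,
      Finset.mem_sigma.mpr ⟨(Finset.mem_filter.mp hg).2.2.2.2 0, hg⟩, hcons⟩
  · rintro ⟨j, g⟩ h
    obtain ⟨-, hg⟩ := Finset.mem_sigma.mp h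
    have hj : g 0 = j := (Finset.mem_filter.mp hg).2.2.1
    subst hj
    exact (pathWeight_cons m w A l g).symm

lemma sum_pathsIn_zero [Fintype V] [DecidableEq V] (m : Finset V → V → V → ℝ)
    (w : V → V → ℝ) {A : Finset V} {l : V} (i : V) (hl : l ∈ A) :
    ∑ f ∈ pathsIn A 0 l i, pathWeight m w A f = if l = i then m A l l else 0 := by
  split_ifs with h
  · have hp : pathsIn A 0 l i = {fun _ => l} := by
      ext f
      simp only [pathsIn, Finset.mem_filter, Finset.mem_univ, true_and, Finset.mem_singleton]
      constructor
      · rintro ⟨-, h0, -⟩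
        funext k
        rw [Fin.fin_one_eq_zero k, h0]
      · rintro rfl
        exact ⟨fun a b _ => (Fin.fin_one_eq_zero a).trans (Fin.fin_one_eq_zero b).symm, rfl, h,
          fun _ => hl⟩
    rw [hp, Finset.sum_singleton]
    simp [pathWeight]
  · refine Finset.sum_eq_zero fun f hf => absurd ?_ h
    obtain ⟨-, -, h0, h1, -⟩ := Finset.mem_filter.mp hf
    rw [← h0, ← h1]
    rfl

lemma pathsIn_eq_empty [Fintype V] [DecidableEq V] {A : Finset V} {i : V} (hi : i ∉ A)
    (n : ℕ) (l : V) : pathsIn A n l i = ∅ := by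
  refine Finset.filter_eq_empty_iff.mpr fun f _ hf => hi ?_
  rw [← hf.2.2.1]
  exact hf.2.2.2 _

/-- A kernel `m` satisfying the first-step recursion is the sum of the weights of all paths. -/
lemma eq_sum_pathsIn [Fintype V] [DecidableEq V] {m : Finset V → V → V → ℝ} {w : V → V → ℝ}
    (hm : ∀ (A : Finset V) (i l : V), i ∈ A → l ∈ A → i ≠ l →
      m A i l = m A l l * ∑ j ∈ A.erase l, w j l * m (A.erase l) i j)
    (N : ℕ) (A : Finset V) (hN : A.card = N) {i l : V} (hi : i ∈ A) (hl : l ∈ A) :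
    m A i l = ∑ n ∈ Finset.range N, ∑ f ∈ pathsIn A n l i, pathWeight m w A f := by
  induction N generalizing A l with
  | zero => simp [Finset.card_eq_zero.mp hN] at hi
  | succ N ih =>
    rw [Finset.sum_range_succ', sum_pathsIn_zero m w i hl]
    simp_rw [sum_pathsIn_succ m w _ i hl]
    by_cases h : l = i
    · subst h
      simp [pathsIn_eq_empty]
    · rw [if_neg h, add_zero, hm A i l hi hl (Ne.symm h), ← Finset.mul_sum, Finset.sum_comm]
      congr 1
      refine Finset.sum_congr rfl fun j hj => ?_
      rw [← Finset.mul_sum, ih (A.erase l) (by rw [Finset.card_erase_of_mem hl, hN]; rfl)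
        (Finset.mem_erase.mpr ⟨Ne.symm h, hi⟩) hj]

/-- **Lemma 6 (covariance decomposition).** For a Gaussian distribution with positive
definite covariance `Σ` satisfying the global Markov property with respect to an
undirected graph `G` over `K`, the covariance `Σ_{i,l}` is a sum, over all paths of `G`
between `l` and `i`, of products of partial regression coefficients and inflation
factors. -/
theorem covariance_path_decomposition
    {V : Type*} [Fintype V] [DecidableEq V]
    (S : Matrix V V ℝ) (hS : S.PosDef) (G : SimpleGraph V)
    (hMarkov : ∀ i j : V, i ≠ j → ¬ G.Adj i j → S⁻¹ i j = 0)
    (i l : V) (hil : i ≠ l) :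
    S i l =
      ∑ n ∈ Finset.range (Fintype.card V),
        ∑ f ∈ (Finset.univ : Finset (Fin (n + 1) → V)).filter (fun f =>
            Function.Injective f ∧ f 0 = l ∧ f (Fin.last n) = i ∧
            ∀ k : Fin n, G.Adj (f k.castSucc) (f k.succ)),
          S (f 0) (f 0) *
            ∏ k : Fin n,
              (-(S⁻¹ (f k.succ) (f k.castSucc)) / S⁻¹ (f k.succ) (f k.succ)) *
              (condVar S (f k.succ)
                  ((Finset.univ.filter fun m : Fin (n + 1) => m ≤ k.castSucc).image f) /
                condVar S (f k.succ) (Finset.univ.erase (f k.succ))) := by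
  have hne : ∀ (n : ℕ), ∀ f : Fin (n + 1) → V, Function.Injective f → ∀ k : Fin n,
      f k.succ ≠ f k.castSucc := fun n f hf k h => (Fin.castSucc_lt_succ (i := k)).ne' (hf h)
  have hterm : ∀ (n : ℕ) (f : Fin (n + 1) → V),
      S (f 0) (f 0) *
          ∏ k : Fin n,
            (-(S⁻¹ (f k.succ) (f k.castSucc)) / S⁻¹ (f k.succ) (f k.succ)) *
            (condVar S (f k.succ)
                ((Finset.univ.filter fun m : Fin (n + 1) => m ≤ k.castSucc).image f) /
              condVar S (f k.succ) (Finset.univ.erase (f k.succ))) =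
        pathWeight (fun A => condCov S Aᶜ) (fun a b => -S⁻¹ a b) Finset.univ f := by
    intro n f
    unfold pathWeight
    congr 1
    · beta_reduce
      rw [Finset.compl_univ, condCov_empty]
    · refine Finset.prod_congr rfl fun k _ => ?_
      have hpos : S⁻¹ (f k.succ) (f k.succ) ≠ 0 := hS.inv.diag_pos.ne'
      beta_reduce
      rw [condVar_erase_self hS, ← Finset.compl_eq_univ_sdiff, compl_compl, div_inv_eq_mul]
      change _ / _ * (condCov S _ _ _ * _) = _
      field_simp
  simp_rw [hterm]
  have h := eq_sum_pathsIn (m := fun A => condCov S Aᶜ) (w := fun a b => -S⁻¹ a b)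
    (fun A i l hi hl hil => condCov_eq_mul_sum_erase hS hi hl hil) (Fintype.card V)
    Finset.univ Finset.card_univ (Finset.mem_univ i) (Finset.mem_univ l)
  have hS0 : condCov S (Finset.univ : Finset V)ᶜ i l = S i l := by
    rw [Finset.compl_univ, condCov_empty]
  rw [← hS0]
  refine h.trans (Finset.sum_congr rfl fun n _ => ?_)
  symm
  refine Finset.sum_subset ?_ ?_
  · intro f hf
    obtain ⟨hinj, h0, h1, -⟩ := (Finset.mem_filter.mp hf).2
    exact Finset.mem_filter.mpr
      ⟨Finset.mem_univ _, hinj, h0, h1, fun _ => Finset.mem_univ _⟩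
  · intro f hf hf'
    obtain ⟨hinj, h0, h1, -⟩ := (Finset.mem_filter.mp hf).2
    have hk : ∃ k : Fin n, ¬ G.Adj (f k.castSucc) (f k.succ) := by
      by_contra! hall
      exact hf' (Finset.mem_filter.mpr ⟨Finset.mem_univ _, hinj, h0, h1, hall⟩)
    obtain ⟨k, hk⟩ := hk
    unfold pathWeight
    rw [Finset.prod_eq_zero (Finset.mem_univ k), mul_zero]
    beta_reduce
    rw [hMarkov _ _ (hne n f hinj k) fun hadj => hk hadj.symm, neg_zero, zero_mul]
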